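/- If G is a finite simple graph on n vertices with vertex connectivity κ, then the no-initial-cost product hopping throttling number satisfies th_H^*(G) ≥ ⌈(n + κ)/2⌉. In particular, every hopping forcing set B of G with pt_H(G;B) = 1 satisfies |B| ≥ (n + κ)/2. -/

import Mathlib

/-!
Let `B` be a set of `k < n` vertices from which every vertex becomes blue within `t` rounds.
It suffices to show `n + κ ≤ 2kt`.

* A nonempty set `A ⊆ B` with `N(A) ⊆ B ≠ V` is separated from the white vertices by `B \ A`, so
  `κ ≤ k - |A|` (`vertexConnectivity_le_card_sdiff`).
* If `t = 1`, the forcing vertices form such a set `A`, with `|A| = n - k`; thus `κ ≤ 2k - n`.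
* If `t ≥ 2`, every force trades one blue vertex that has not forced for another, so there are
  always exactly `k` of these and each round colors at most `k` vertices (`Reach.card_le`).
  Hence `n ≤ k + kt`. The first forcing vertex gives `κ ≤ k`, and `n + κ ≤ k(t + 2) ≤ 2kt`.

The junk product `0 * ⊤ = 0` in `ℕ∞` plays no role, because `H(G) ≥ 1` when `n ≥ 1`
(`pos_of_forcingNumber_le`).
-/

namespace Hopping

variable {V : Type*} [DecidableEq V]

/-- One round of simultaneous hopping forces.  A state is a pair `(blue, used)`
consisting of the set of blue vertices and the set of vertices that have already
performed a force.  In one round, a collection `F` of forces `(v, w)` is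
performed simultaneously: each forcing vertex `v` is blue, has not yet performed
a force, and has all of its neighbors blue; each forced vertex `w` is white;
distinct forces have distinct forcing vertices and distinct forced vertices. -/
def Round (G : SimpleGraph V) (S T : Finset V × Finset V) : Prop :=
  ∃ F : Finset (V × V),
    (∀ p ∈ F, p.1 ∈ S.1 ∧ p.1 ∉ S.2 ∧ (∀ w, G.Adj p.1 w → w ∈ S.1) ∧ p.2 ∉ S.1) ∧
    (∀ p ∈ F, ∀ q ∈ F, p ≠ q → p.1 ≠ q.1 ∧ p.2 ≠ q.2) ∧
    T.1 = S.1 ∪ F.image Prod.snd ∧ T.2 = S.2 ∪ F.image Prod.fst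

/-- `Reach G t S T` means that state `T` is reachable from state `S` in exactly
`t` rounds of simultaneous hopping forces. -/
def Reach (G : SimpleGraph V) : ℕ → Finset V × Finset V → Finset V × Finset V → Prop
  | 0, S, T => S = T
  | t + 1, S, T => ∃ U, Round G S U ∧ Reach G t U T

variable [Fintype V]

/-- `B` is a hopping forcing set of `G`: starting with exactly the vertices of
`B` blue (and no vertex having performed a force), some sequence of hopping
forces colors every vertex blue. -/
def IsForcingSet (G : SimpleGraph V) (B : Finset V) : Prop :=
  ∃ t T, Reach G t (B, ∅) T ∧ T.1 = Finset.univ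

/-- The hopping forcing number `H(G)`: the minimum size of a hopping forcing set. -/
noncomputable def forcingNumber (G : SimpleGraph V) : ℕ :=
  sInf {k | ∃ B : Finset V, B.card = k ∧ IsForcingSet G B}

/-- The hopping propagation time `pt_H(G; B)`: the least number of rounds of
simultaneous hopping forces needed to color every vertex blue starting from `B`,
or `∞` if `B` is not a hopping forcing set. -/
noncomputable def propTime (G : SimpleGraph V) (B : Finset V) : ℕ∞ :=
  sInf {t : ℕ∞ | ∃ t' : ℕ, t = (t' : ℕ∞) ∧ ∃ T, Reach G t' (B, ∅) T ∧ T.1 = Finset.univ}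

/-- The hopping throttling number `th_H(G) = min_B (|B| + pt_H(G;B))`. -/
noncomputable def throttling (G : SimpleGraph V) : ℕ∞ :=
  ⨅ B : Finset V, ((B.card : ℕ∞) + propTime G B)

end Hopping

namespace Hopping

/-- The vertex connectivity of `G`: the minimum number of vertices whose
deletion disconnects `G` or leaves a single vertex. -/
noncomputable def vertexConnectivity {V : Type*} [Fintype V] [DecidableEq V]
    (G : SimpleGraph V) : ℕ :=
  sInf {k | ∃ S : Finset V, S.card = k ∧
    (¬ (G.induce ((↑S)ᶜ : Set V)).Connected ∨ (Sᶜ : Finset V).card = 1)}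

end Hopping

namespace Hopping

variable {V : Type*} [DecidableEq V] [Fintype V]

/-- `pt_H(G, k)`: the minimum hopping propagation time over all vertex subsets
of size `k`. -/
noncomputable def propTimeOfSize (G : SimpleGraph V) (k : ℕ) : ℕ∞ :=
  ⨅ B ∈ {B : Finset V | B.card = k}, propTime G B

/-- The no-initial-cost product hopping throttling number
`th_H^*(G) = min_{H(G) ≤ k < n} k · pt_H(G, k)`. -/
noncomputable def productThrottlingStar (G : SimpleGraph V) : ℕ∞ :=
  ⨅ k ∈ {k : ℕ | forcingNumber G ≤ k ∧ k < Fintype.card V}, (k : ℕ∞) * propTimeOfSize G k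

end Hopping

namespace Hopping

variable {V : Type*} [DecidableEq V]

/-- The number of blue vertices that have not forced stays equal to `k`, so a round colors at
most `k` vertices. -/
lemma Round.card_le {G : SimpleGraph V} {S T : Finset V × Finset V} {k : ℕ}
    (h : Round G S T) (hs : S.2 ⊆ S.1) (hk : S.1.card = S.2.card + k) :
    T.2 ⊆ T.1 ∧ T.1.card = T.2.card + k ∧ T.1.card ≤ S.1.card + k := by
  obtain ⟨F, hF, hinj, h1, h2⟩ := h
  have c1 : (F.image Prod.fst).card = F.card := by
    refine Finset.card_image_of_injOn fun p hp q hq hpq => ?_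
    by_contra hne
    exact (hinj p hp q hq hne).1 hpq
  have c2 : (F.image Prod.snd).card = F.card := by
    refine Finset.card_image_of_injOn fun p hp q hq hpq => ?_
    by_contra hne
    exact (hinj p hp q hq hne).2 hpq
  have hsub : F.image Prod.fst ⊆ S.1 \ S.2 := by
    intro x hx
    obtain ⟨p, hp, rfl⟩ := Finset.mem_image.1 hx
    exact Finset.mem_sdiff.2 ⟨(hF p hp).1, (hF p hp).2.1⟩
  have d1 : Disjoint S.1 (F.image Prod.snd) := by
    rw [Finset.disjoint_right]
    intro x hx
    obtain ⟨p, hp, rfl⟩ := Finset.mem_image.1 hx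
    exact (hF p hp).2.2.2
  have d2 : Disjoint S.2 (F.image Prod.fst) := by
    rw [Finset.disjoint_right]
    exact fun x hx => (Finset.mem_sdiff.1 (hsub hx)).2
  have hle := Finset.card_le_card hsub
  rw [Finset.card_sdiff_of_subset hs] at hle
  have e1 := Finset.card_union_of_disjoint d1
  have e2 := Finset.card_union_of_disjoint d2
  rw [← h1] at e1
  rw [← h2] at e2
  refine ⟨?_, by omega, by omega⟩
  rw [h1, h2]
  exact Finset.union_subset (hs.trans Finset.subset_union_left)
    ((hsub.trans Finset.sdiff_subset).trans Finset.subset_union_left)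

lemma Reach.card_le {G : SimpleGraph V} {k t : ℕ} {S T : Finset V × Finset V}
    (h : Reach G t S T) (hs : S.2 ⊆ S.1) (hk : S.1.card = S.2.card + k) :
    T.1.card ≤ S.1.card + k * t := by
  induction t generalizing S with
  | zero =>
    obtain rfl : S = T := h
    simp
  | succ t ih =>
    obtain ⟨U, hU, hr⟩ := h
    obtain ⟨a, b, c⟩ := hU.card_le hs hk
    have := ih hr a b
    rw [Nat.mul_succ]
    omega

/-- If the blue set ever changes, then some vertex of `B` could already force at the start. -/
lemma Reach.exists_closed {G : SimpleGraph V} {t : ℕ} {B : Finset V} {T : Finset V × Finset V}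
    (h : Reach G t (B, ∅) T) (hT : T.1 ≠ B) : ∃ v ∈ B, ∀ w, G.Adj v w → w ∈ B := by
  induction t with
  | zero =>
    obtain rfl : (B, ∅) = T := h
    exact absurd rfl hT
  | succ t ih =>
    obtain ⟨U, ⟨F, hF, -, h1, h2⟩, hr⟩ := h
    rcases F.eq_empty_or_nonempty with rfl | ⟨p, hp⟩
    · have hU : U = (B, ∅) := Prod.ext (by simpa using h1) (by simpa using h2)
      exact ih (hU ▸ hr)
    · exact ⟨p.1, (hF p hp).1, (hF p hp).2.2.1⟩

variable [Fintype V]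

lemma vertexConnectivity_le_card_sdiff (G : SimpleGraph V) {A B : Finset V} (hA : A.Nonempty)
    (hAB : A ⊆ B) (hB : B ≠ Finset.univ) (hN : ∀ v ∈ A, ∀ w, G.Adj v w → w ∈ B) :
    vertexConnectivity G ≤ (B \ A).card := by
  refine Nat.sInf_le ⟨B \ A, rfl, Or.inl fun hc => ?_⟩
  obtain ⟨a, ha⟩ := hA
  obtain ⟨w, hw⟩ : ∃ w, w ∉ B := by
    by_contra! h
    exact hB (Finset.eq_univ_iff_forall.2 h)
  have hmem : ∀ x ∈ A, x ∈ ((↑(B \ A))ᶜ : Set V) := fun x hx => by simp [hx]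
  -- A vertex reachable from `a` once `B \ A` is deleted stays in `A`.
  have key : ∀ x y : ((↑(B \ A))ᶜ : Set V),
      (G.induce ((↑(B \ A))ᶜ : Set V)).Walk x y → x.1 ∈ A → y.1 ∈ A := by
    intro x y p
    induction p with
    | nil => exact id
    | @cons u v _ hadj _ ih =>
      intro hu
      have hvB : v.1 ∈ B := hN _ hu _ hadj
      have hv := v.2
      simp only [Set.mem_compl_iff, Finset.mem_coe, Finset.mem_sdiff] at hv
      exact ih (by tauto)
  obtain ⟨p⟩ := hc.preconnected ⟨a, hmem a ha⟩ ⟨w, by simp [hw]⟩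
  exact hw (hAB (key _ _ p ha))

/-- The throttling bound for a single proper blue set and a given number of rounds. -/
lemma Reach.card_add_vertexConnectivity_le {G : SimpleGraph V} {t : ℕ} {B : Finset V}
    {T : Finset V × Finset V} (h : Reach G t (B, ∅) T) (hT : T.1 = Finset.univ)
    (hB : B ≠ Finset.univ) :
    Fintype.card V + vertexConnectivity G ≤ 2 * (B.card * t) := by
  match t, h with
  | 0, h =>
    obtain rfl : (B, ∅) = T := h
    exact absurd hT hB
  | 1, h =>
    obtain ⟨U, ⟨F, hF, hinj, h1, -⟩, rfl⟩ := h
    have c1 : (F.image Prod.fst).card = F.card := by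
      refine Finset.card_image_of_injOn fun p hp q hq hpq => ?_
      by_contra hne
      exact (hinj p hp q hq hne).1 hpq
    have c2 : (F.image Prod.snd).card ≤ F.card := Finset.card_image_le
    have c3 := Finset.card_union_le B (F.image Prod.snd)
    rw [← h1, hT, Finset.card_univ] at c3
    have hsub : F.image Prod.fst ⊆ B := by
      intro x hx
      obtain ⟨p, hp, rfl⟩ := Finset.mem_image.1 hx
      exact (hF p hp).1
    have hne : (F.image Prod.fst).Nonempty := by
      rw [Finset.image_nonempty, Finset.nonempty_iff_ne_empty]
      rintro rfl
      exact hB (by simpa using h1.symm.trans hT)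
    have hκ := vertexConnectivity_le_card_sdiff G hne hsub hB (by
      intro v hv
      obtain ⟨p, hp, rfl⟩ := Finset.mem_image.1 hv
      exact (hF p hp).2.2.1)
    rw [Finset.card_sdiff_of_subset hsub] at hκ
    have := Finset.card_le_card hsub
    omega
  | t + 2, h =>
    have hn := h.card_le (k := B.card) (by simp) (by simp)
    rw [hT, Finset.card_univ] at hn
    obtain ⟨v, hv, hN⟩ := h.exists_closed (by rw [hT]; exact hB.symm)
    have hκ := vertexConnectivity_le_card_sdiff G (Finset.singleton_nonempty v)
      (Finset.singleton_subset_iff.2 hv) hB (by simpa using hN)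
    have := Finset.card_le_card (Finset.sdiff_subset (s := B) (t := {v}))
    dsimp only at hn
    nlinarith [Nat.zero_le (B.card * t)]

lemma pos_of_forcingNumber_le {G : SimpleGraph V} {k : ℕ} (h : forcingNumber G ≤ k)
    (hk : k < Fintype.card V) : 0 < k := by
  rcases Nat.eq_zero_or_pos k with rfl | hpos
  · have hne : {k | ∃ B : Finset V, B.card = k ∧ IsForcingSet G B}.Nonempty :=
      ⟨_, Finset.univ, rfl, 0, (Finset.univ, ∅), rfl, rfl⟩
    obtain ⟨B, hB, t, T, hr, hT⟩ := Nat.sInf_mem hne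
    obtain rfl : B = ∅ := Finset.card_eq_zero.1 (hB.trans (Nat.le_zero.1 h))
    obtain ⟨v, hv, -⟩ := hr.exists_closed (by
      rw [hT]
      intro he
      have := congrArg Finset.card he
      simp only [Finset.card_univ, Finset.card_empty] at this
      omega)
    simp at hv
  · exact hpos

end Hopping

/-- If `G` has `n` vertices and vertex connectivity `κ`, then
`th_H^*(G) ≥ ⌈(n + κ)/2⌉`; in particular every hopping forcing set `B` with
`pt_H(G;B) = 1` satisfies `|B| ≥ (n + κ)/2`. -/
theorem productHoppingThrottlingStar_ge {V : Type*} [Fintype V] [DecidableEq V]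
    (G : SimpleGraph V) :
    (⌈((Fintype.card V : ℝ) + (Hopping.vertexConnectivity G : ℝ)) / 2⌉₊ : ℕ∞) ≤
        Hopping.productThrottlingStar G ∧
      ∀ B : Finset V, Hopping.IsForcingSet G B → Hopping.propTime G B = 1 →
        ((Fintype.card V : ℝ) + (Hopping.vertexConnectivity G : ℝ)) / 2 ≤ (B.card : ℝ) := by
  constructor
  · refine le_iInf₂ fun k hk => ?_
    obtain ⟨hH, hkn⟩ := hk
    have hpos := Hopping.pos_of_forcingNumber_le hH hkn
    by_cases htop : Hopping.propTimeOfSize G k = ⊤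
    · rw [htop, ENat.mul_top (by exact_mod_cast hpos.ne')]
      exact le_top
    · obtain ⟨p, hp⟩ := ENat.ne_top_iff_exists.1 htop
      have hlt : Hopping.propTimeOfSize G k < ((p + 1 : ℕ) : ℕ∞) := by
        rw [← hp]
        exact_mod_cast Nat.lt_succ_self p
      obtain ⟨B, hB⟩ := iInf_lt_iff.1 hlt
      obtain ⟨hBk, hB⟩ := iInf_lt_iff.1 hB
      obtain ⟨_, ⟨t, rfl, T, hr, hT⟩, ht⟩ := sInf_lt_iff.1 hB
      obtain rfl : B.card = k := hBk
      have htp : t ≤ p := Nat.lt_succ_iff.1 (by exact_mod_cast ht)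
      have hmain := hr.card_add_vertexConnectivity_le hT (by
        rintro rfl
        exact hkn.ne Finset.card_univ)
      have hmul := Nat.mul_le_mul_left B.card htp
      rw [← hp]
      norm_cast
      rw [Nat.ceil_le, div_le_iff₀ two_pos]
      norm_cast
      omega
  · intro B _ h1
    have hlt : Hopping.propTime G B < ((2 : ℕ) : ℕ∞) := by
      rw [h1]
      norm_num
    obtain ⟨_, ⟨t, rfl, T, hr, hT⟩, ht⟩ := sInf_lt_iff.1 hlt
    have ht1 : t ≤ 1 := Nat.lt_succ_iff.1 (by exact_mod_cast ht)
    have hB : B ≠ Finset.univ := by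
      rintro rfl
      have h0 : Hopping.propTime G Finset.univ ≤ 0 :=
        sInf_le ⟨0, rfl, (Finset.univ, ∅), rfl, rfl⟩
      rw [h1] at h0
      exact absurd h0 (by norm_num)
    have hmain := hr.card_add_vertexConnectivity_le hT hB
    have hmul := Nat.mul_le_mul_left B.card ht1
    rw [div_le_iff₀ two_pos]
    norm_cast
    omega
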